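/- For every p ∈ (0,1), −2/3 ≤ (1 − p⁴ + 4p² ln p) / ((1 − p²)² ln p) < 0, and the expression tends to −2/3 as p → 1⁻. -/

import Mathlib

open Filter Set Topology

/-- The Padé bound `log q ≤ -3(1 - q²)/(1 + 4q + q²)` on `(0,1)`, with denominators cleared. -/
lemma three_mul_one_sub_sq_add_mul_log_nonpos {q : ℝ} (hq : q ∈ Ioo (0 : ℝ) 1) :
    3 * (1 - q ^ 2) + (1 + 4 * q + q ^ 2) * Real.log q ≤ 0 := by
  have hpos : ∀ x : ℝ, 0 < x → 0 < 1 + 4 * x + x ^ 2 := fun x hx => by positivity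
  have hderiv : ∀ x : ℝ, 0 < x →
      HasDerivAt (fun x => Real.log x + 3 * (1 - x ^ 2) / (1 + 4 * x + x ^ 2))
        ((1 - x) ^ 4 / (x * (1 + 4 * x + x ^ 2) ^ 2)) x := fun x hx => by
    have hx' := hpos x hx
    have hnum : HasDerivAt (fun x : ℝ => 3 * (1 - x ^ 2)) (3 * (-(2 * x))) x := by
      simpa using ((hasDerivAt_pow 2 x).const_sub 1).const_mul 3
    have hden : HasDerivAt (fun x : ℝ => 1 + 4 * x + x ^ 2) (4 + 2 * x) x := by
      simpa using (((hasDerivAt_id x).const_mul 4).const_add 1).fun_add (hasDerivAt_pow 2 x)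
    refine ((Real.hasDerivAt_log hx.ne').fun_add (hnum.fun_div hden hx'.ne')).congr_deriv ?_
    field_simp
    ring
  have hmono : MonotoneOn (fun x => Real.log x + 3 * (1 - x ^ 2) / (1 + 4 * x + x ^ 2))
      (Ioi (0 : ℝ)) := by
    refine monotoneOn_of_hasDerivWithinAt_nonneg (convex_Ioi 0)
      (fun x hx => (hderiv x hx).continuousAt.continuousWithinAt)
      (fun x hx => (hderiv x (interior_subset hx)).hasDerivWithinAt) fun x hx => ?_
    have hx0 : 0 < x := interior_subset hx
    positivity
  have h := hmono hq.1 (mem_Ioi.2 one_pos) hq.2.le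
  have hq' := hpos q hq.1
  norm_num at h
  have h2 := mul_le_mul_of_nonneg_left h hq'.le
  field_simp at h2
  linarith

/-- The bound `-(1 - q²)/(2q) < log q` on `(0,1)`, with denominators cleared. -/
lemma one_sub_sq_add_two_mul_log_pos {q : ℝ} (hq : q ∈ Ioo (0 : ℝ) 1) :
    0 < 1 - q ^ 2 + 2 * q * Real.log q := by
  have hderiv : ∀ x : ℝ, 0 < x →
      HasDerivAt (fun x => Real.log x + (x⁻¹ - x) / 2) (-(1 - x) ^ 2 / (2 * x ^ 2)) x :=
    fun x hx => by
      refine ((Real.hasDerivAt_log hx.ne').fun_add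
        (((hasDerivAt_inv hx.ne').fun_sub (hasDerivAt_id x)).div_const 2)).congr_deriv ?_
      field_simp
      ring
  have hanti : StrictAntiOn (fun x => Real.log x + (x⁻¹ - x) / 2) (Ioc (0 : ℝ) 1) := by
    refine strictAntiOn_of_hasDerivWithinAt_neg (convex_Ioc 0 1)
      (fun x hx => (hderiv x hx.1).continuousAt.continuousWithinAt)
      (fun x hx => (hderiv x (interior_subset hx).1).hasDerivWithinAt) fun x hx => ?_
    rw [interior_Ioc] at hx
    have hx0 := hx.1
    have hx1 : 0 < 1 - x := sub_pos.2 hx.2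
    rw [neg_div, neg_lt_zero]
    positivity
  have h := hanti ⟨hq.1, hq.2.le⟩ ⟨one_pos, le_rfl⟩ hq.2
  have hq0 := hq.1
  norm_num at h
  have h2 := mul_pos (mul_pos two_pos hq0) h
  field_simp at h2
  linarith

lemma abs_one_sub_sq_add_two_mul_log_div_sub_le {q : ℝ} (hq : q ∈ Ioo (0 : ℝ) 1) :
    |(1 - q ^ 2 + 2 * q * Real.log q) / (1 - q) ^ 3 - 1 / 3| ≤ 3 * (1 - q) := by
  obtain ⟨hq0, hq1⟩ := hq
  have hx : 0 < 1 - q := sub_pos.2 hq1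
  have h := Real.abs_log_sub_add_sum_range_le (x := 1 - q) (by rw [abs_of_pos hx]; linarith) 3
  rw [abs_of_pos hx, sub_sub_cancel, le_div_iff₀ hq0, ← abs_of_pos hq0, ← abs_mul,
    abs_of_pos hq0, abs_le] at h
  norm_num [Finset.sum_range_succ] at h
  have hx3 : 0 < (1 - q) ^ 3 := by positivity
  have hx4 : 0 < (1 - q) ^ 4 := by positivity
  rw [abs_le, le_sub_iff_add_le, sub_le_iff_le_add, le_div_iff₀ hx3, div_le_iff₀ hx3]
  constructor <;> nlinarith

lemma tendsto_one_sub_sq_add_two_mul_log_div :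
    Tendsto (fun q : ℝ => (1 - q ^ 2 + 2 * q * Real.log q) / ((1 - q) ^ 2 * (Real.log q / 2)))
      (𝓝[<] 1) (𝓝 (-2 / 3)) := by
  have hnum : Tendsto (fun q : ℝ => (1 - q ^ 2 + 2 * q * Real.log q) / (1 - q) ^ 3)
      (𝓝[<] 1) (𝓝 (1 / 3)) := by
    rw [tendsto_iff_norm_sub_tendsto_zero]
    have hlin : Tendsto (fun q : ℝ => 3 * (1 - q)) (𝓝[<] 1) (𝓝 0) :=
      tendsto_nhdsWithin_of_tendsto_nhds
        (Continuous.tendsto' (by fun_prop) _ _ (by norm_num))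
    refine squeeze_zero' (Eventually.of_forall fun _ => norm_nonneg _) ?_ hlin
    filter_upwards [Ioo_mem_nhdsLT (zero_lt_one' ℝ)] with q hq
    exact abs_one_sub_sq_add_two_mul_log_div_sub_le hq
  have hlog : Tendsto (slope Real.log 1) (𝓝[<] 1) (𝓝 1) := by
    have h := (Real.hasDerivAt_log one_ne_zero).tendsto_slope
    rw [inv_one] at h
    exact h.mono_left (nhdsWithin_mono _ fun x hx => (mem_Iio.1 hx).ne)
  have h := (hnum.div hlog one_ne_zero).const_mul (-2)
  rw [show (-2 : ℝ) * (1 / 3 / 1) = -2 / 3 by norm_num] at h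
  refine h.congr' ?_
  filter_upwards [Ioo_mem_nhdsLT (zero_lt_one' ℝ)] with q hq
  have hx : 1 - q ≠ 0 := (sub_pos.2 hq.2).ne'
  have hx' : q - 1 ≠ 0 := (sub_neg.2 hq.2).ne
  have hL : Real.log q ≠ 0 := (Real.log_neg hq.1 hq.2).ne
  simp only [Pi.div_apply, slope_def_field, Real.log_one, sub_zero]
  field_simp
  ring


/-- For every `p ∈ (0,1)`,
`−2/3 ≤ (1 − p⁴ + 4p² ln p) / ((1 − p²)² ln p) < 0`, and the expression tends to `−2/3`
as `p → 1⁻`. -/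
theorem coefficient_bound_two_thirds :
    (∀ p ∈ Set.Ioo (0 : ℝ) 1,
      -2 / 3 ≤ (1 - p ^ 4 + 4 * p ^ 2 * Real.log p) / ((1 - p ^ 2) ^ 2 * Real.log p) ∧
      (1 - p ^ 4 + 4 * p ^ 2 * Real.log p) / ((1 - p ^ 2) ^ 2 * Real.log p) < 0) ∧
    Filter.Tendsto
      (fun p : ℝ => (1 - p ^ 4 + 4 * p ^ 2 * Real.log p) / ((1 - p ^ 2) ^ 2 * Real.log p))
      (nhdsWithin 1 (Set.Iio 1)) (nhds (-2 / 3)) := by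
  have key : ∀ p : ℝ,
      (1 - p ^ 4 + 4 * p ^ 2 * Real.log p) / ((1 - p ^ 2) ^ 2 * Real.log p) =
        (1 - (p ^ 2) ^ 2 + 2 * p ^ 2 * Real.log (p ^ 2)) /
          ((1 - p ^ 2) ^ 2 * (Real.log (p ^ 2) / 2)) := fun p => by
    rw [Real.log_pow]
    push_cast
    ring_nf
  have hsq : ∀ p ∈ Ioo (0 : ℝ) 1, p ^ 2 ∈ Ioo (0 : ℝ) 1 := fun p hp =>
    ⟨pow_pos hp.1 2, pow_lt_one₀ hp.1.le hp.2 two_ne_zero⟩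
  simp only [key]
  refine ⟨fun p hp => ?_, ?_⟩
  · have hq := hsq p hp
    generalize p ^ 2 = q at hq
    have hden : (1 - q) ^ 2 * (Real.log q / 2) < 0 :=
      mul_neg_of_pos_of_neg (pow_pos (sub_pos.2 hq.2) 2)
        (div_neg_of_neg_of_pos (Real.log_neg hq.1 hq.2) two_pos)
    refine ⟨?_, div_neg_of_pos_of_neg (one_sub_sq_add_two_mul_log_pos hq) hden⟩
    rw [le_div_iff_of_neg hden]
    linarith [three_mul_one_sub_sq_add_mul_log_nonpos hq]
  · have hlim : Tendsto (fun p : ℝ => p ^ 2) (𝓝[<] 1) (𝓝[<] 1) := by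
      refine tendsto_nhdsWithin_iff.2 ⟨tendsto_nhdsWithin_of_tendsto_nhds
        (Continuous.tendsto' (by fun_prop) _ _ (by norm_num)), ?_⟩
      filter_upwards [Ioo_mem_nhdsLT (zero_lt_one' ℝ)] with p hp using (hsq p hp).2
    exact tendsto_one_sub_sq_add_two_mul_log_div.comp hlim
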